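/- Let μ be a signed charge on a semi-ring 𝒮 with values in (-∞,∞] (i.e. μ > -∞). The charges μ⁺ := μ ∨ 0 and μ⁻ := (-μ) ∨ 0 satisfy μ⁺ = μ + μ⁻ and |μ| = μ⁺ + μ⁻ (as [0,∞]-valued set functions, with the convention that the identities hold trivially at sets where μ is +∞). If μ is a signed measure, then μ⁺ and μ⁻ are measures. -/

import Mathlib

/-!
The functions `pos`, `neg` and `var` are rewritten as coercions of `[0,∞]`-valued partition suprema
`psup S h`, with `h = (μ ·)⁺`, `(μ ·)⁻` and their sum.

*Algebraic identities.* If `μ A = ∞`, both sides are `∞`. If `μ A` is finite, then `μ` is finite on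
all pieces of any partition `P` of `A`, and finite additivity gives
`∑_P μ⁺ + (μ A)⁻ = ∑_P μ⁻ + (μ A)⁺` (`sum_pos_add_eq`), which passes to the supremum over `P`.
It also shows that of two partitions the one with the larger `∑_P μ⁺` has the larger `∑_P μ⁻`, so
the supremum of the sum of the two is the sum of their suprema, with no need of common refinements.

*Countable additivity.* `psup S h` is superadditive, because partitions of disjoint sets can be
joined and completed to a partition of the whole. It is countably subadditive as soon as `h` is
(`psup_iUnion`): a piece `C` of a partition of `⋃ n, A n` is the disjoint union of the `C ∩ A n`,
and for each `n` these form a partition of `A n`. Countable subadditivity of `(μ ·)⁺` and `(μ ·)⁻`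
follows from countable additivity of `μ`, by continuity of `x ↦ x⁺` and `x ↦ x⁻` on `EReal`. If
`∑ μ (A n)` fails to converge unconditionally, its `tsum` is by convention `0`, and the inequality
is trivial.
-/


open MeasureTheory Set
open scoped ENNReal NNReal BigOperators

namespace SignedCharges

variable {Ω : Type*}

/-- `P` is a finite partition of `A` by elements of the family `S`. -/
def IsPartition (S : Set (Set Ω)) (A : Set Ω) (P : Finset (Set Ω)) : Prop :=
  ↑P ⊆ S ∧ (P : Set (Set Ω)).PairwiseDisjoint id ∧ ⋃₀ ↑P = A

/-- The partition-supremum `μ_F` of a family `F = (ν j)` of `EReal`-valued set functions: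
`μ_F(A) = sup` over finite partitions `Π` of `A` by elements of `S` of `Σ_{C ∈ Π} sup_j ν j C`. -/
noncomputable def supFun {J : Type*} (S : Set (Set Ω)) (ν : J → Set Ω → EReal)
    (A : Set Ω) : EReal :=
  ⨆ P : Finset (Set Ω), ⨆ _ : IsPartition S A P, ∑ C ∈ P, ⨆ j, ν j C

/-- The admissibility hypothesis: `sup_j ν j A > -∞` for every `A ∈ S`. -/
def Admissible {J : Type*} (S : Set (Set Ω)) (ν : J → Set Ω → EReal) : Prop :=
  ∀ A ∈ S, ⊥ < ⨆ j, ν j A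

/-- An `EReal`-valued signed charge on `S`: vanishes on `∅`, finitely additive on finite
disjoint unions within `S`, and omits at least one of the values `+∞`, `-∞` on `S`. -/
structure IsCharge (S : Set (Set Ω)) (μ : Set Ω → EReal) : Prop where
  empty : μ ∅ = 0
  additive : ∀ (n : ℕ) (A : Fin n → Set Ω), (∀ i, A i ∈ S) →
    Pairwise (Function.onFun Disjoint A) → (⋃ i, A i) ∈ S → μ (⋃ i, A i) = ∑ i, μ (A i)
  omits : (∀ A ∈ S, μ A ≠ ⊤) ∨ (∀ A ∈ S, μ A ≠ ⊥)

/-- A finite (real-valued) signed charge on `S`. -/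
structure IsRealCharge (S : Set (Set Ω)) (μ : Set Ω → ℝ) : Prop where
  empty : μ ∅ = 0
  additive : ∀ (n : ℕ) (A : Fin n → Set Ω), (∀ i, A i ∈ S) →
    Pairwise (Function.onFun Disjoint A) → (⋃ i, A i) ∈ S → μ (⋃ i, A i) = ∑ i, μ (A i)

/-- Countable additivity for a real-valued set function (unconditional convergence). -/
def CountablyAdditiveR (S : Set (Set Ω)) (μ : Set Ω → ℝ) : Prop :=
  ∀ A : ℕ → Set Ω, (∀ n, A n ∈ S) → Pairwise (Function.onFun Disjoint A) →
    (⋃ n, A n) ∈ S → HasSum (fun n => μ (A n)) (μ (⋃ n, A n))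

/-- Countable sub-additivity for an `EReal`-valued set function. -/
def CountablySubadditiveE (S : Set (Set Ω)) (μ : Set Ω → EReal) : Prop :=
  ∀ A : ℕ → Set Ω, (∀ n, A n ∈ S) → Pairwise (Function.onFun Disjoint A) →
    (⋃ n, A n) ∈ S → μ (⋃ n, A n) ≤ ∑' n, μ (A n)

/-- Countable additivity for an `EReal`-valued set function. -/
def CountablyAdditiveE (S : Set (Set Ω)) (μ : Set Ω → EReal) : Prop :=
  ∀ A : ℕ → Set Ω, (∀ n, A n ∈ S) → Pairwise (Function.onFun Disjoint A) →
    (⋃ n, A n) ∈ S → μ (⋃ n, A n) = ∑' n, μ (A n)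

/-- `μ⁺ = μ ∨ 0` : sup over finite partitions of `Σ_{C} max (μ C) 0`. -/
noncomputable def pos (S : Set (Set Ω)) (μ : Set Ω → EReal) (A : Set Ω) : EReal :=
  ⨆ P : Finset (Set Ω), ⨆ _ : IsPartition S A P, ∑ C ∈ P, max (μ C) 0

/-- `μ⁻ = (-μ) ∨ 0` : sup over finite partitions of `Σ_{C} max (-μ C) 0`. -/
noncomputable def neg (S : Set (Set Ω)) (μ : Set Ω → EReal) (A : Set Ω) : EReal :=
  ⨆ P : Finset (Set Ω), ⨆ _ : IsPartition S A P, ∑ C ∈ P, max (-μ C) 0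

/-- The variation `|μ|` : sup over finite partitions of `Σ_{C} |μ C|`. -/
noncomputable def var (S : Set (Set Ω)) (μ : Set Ω → EReal) (A : Set Ω) : EReal :=
  ⨆ P : Finset (Set Ω), ⨆ _ : IsPartition S A P, ∑ C ∈ P, max (μ C) (-μ C)

/-- The infimum `α ∧ β` of two nonnegative charges:
inf over finite partitions of `Σ_{C} min (α C) (β C)`. -/
noncomputable def infC (S : Set (Set Ω)) (α β : Set Ω → EReal) (A : Set Ω) : EReal :=
  ⨅ P : Finset (Set Ω), ⨅ _ : IsPartition S A P, ∑ C ∈ P, min (α C) (β C)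

/-- The ring generated by a semi-ring: finite unions of elements of `S`. -/
def genRing (S : Set (Set Ω)) : Set (Set Ω) :=
  {A | ∃ P : Finset (Set Ω), ↑P ⊆ S ∧ A = ⋃₀ ↑P}

/-- Coercion of a real-valued set function to an `EReal`-valued one. -/
def toE (μ : Set Ω → ℝ) : Set Ω → EReal := fun A => (μ A : EReal)

/-- `μ` has finite variation on `S`. -/
def FiniteVar (S : Set (Set Ω)) (μ : Set Ω → ℝ) : Prop :=
  ∀ A ∈ S, var S (toE μ) A ≠ ⊤

/-- The supremum of `∑_{C ∈ P} h C` over the finite partitions `P` of `A` by elements of `S`, in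
`[0,∞]`. It is `0` when `A` has no such partition. -/
noncomputable def psup {Ω : Type*} (S : Set (Set Ω)) (h : Set Ω → ℝ≥0∞) (A : Set Ω) : ℝ≥0∞ :=
  ⨆ P : {P : Finset (Set Ω) // IsPartition S A P}, ∑ C ∈ P.1, h C

theorem isPartition_singleton {Ω : Type*} {S : Set (Set Ω)} {A : Set Ω} (hA : A ∈ S) :
    IsPartition S A {A} := by
  refine ⟨by simpa using hA, by simp, by simp⟩

theorem sum_le_psup {Ω : Type*} {S : Set (Set Ω)} (h : Set Ω → ℝ≥0∞) {A : Set Ω}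
    {P : Finset (Set Ω)} (hP : IsPartition S A P) : ∑ C ∈ P, h C ≤ psup S h A :=
  le_iSup (fun P : {P : Finset (Set Ω) // IsPartition S A P} => ∑ C ∈ P.1, h C) ⟨P, hP⟩

/-! ### Superadditivity -/

open Classical in
theorem isPartition_union {Ω : Type*} {S : Set (Set Ω)} {A B : Set Ω} (hAB : Disjoint A B)
    {P Q : Finset (Set Ω)} (hP : IsPartition S A P) (hQ : IsPartition S B Q) :
    IsPartition S (A ∪ B) (P ∪ Q) := by
  obtain ⟨hP1, hP2, rfl⟩ := hP
  obtain ⟨hQ1, hQ2, rfl⟩ := hQ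
  refine ⟨by simp [hP1, hQ1], ?_, by simp [sUnion_union]⟩
  rw [Finset.coe_union, pairwiseDisjoint_union]
  refine ⟨hP2, hQ2, fun u hu v hv _ => ?_⟩
  exact disjoint_of_subset (subset_sUnion_of_mem hu) (subset_sUnion_of_mem hv) hAB

open Classical in
theorem sum_union_of_isPartition {Ω : Type*} {S : Set (Set Ω)} {h : Set Ω → ℝ≥0∞} (h0 : h ∅ = 0)
    {A B : Set Ω} (hAB : Disjoint A B) {P Q : Finset (Set Ω)} (hP : IsPartition S A P)
    (hQ : IsPartition S B Q) : ∑ C ∈ P, h C + ∑ C ∈ Q, h C = ∑ C ∈ P ∪ Q, h C := by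
  -- The only piece the two partitions may share is the empty set.
  have hz : ∑ C ∈ P ∩ Q, h C = 0 := by
    refine Finset.sum_eq_zero fun C hC => ?_
    rw [Finset.mem_inter] at hC
    have h1 : C ⊆ A := hP.2.2 ▸ subset_sUnion_of_mem (Finset.mem_coe.2 hC.1)
    have h2 : C ⊆ B := hQ.2.2 ▸ subset_sUnion_of_mem (Finset.mem_coe.2 hC.2)
    have h3 : C = ∅ := subset_empty_iff.1 (hAB h1 h2)
    rw [h3, h0]
  rw [← Finset.sum_union_inter, hz, add_zero]

theorem psup_add_le {Ω : Type*} {S : Set (Set Ω)} {h : Set Ω → ℝ≥0∞} (h0 : h ∅ = 0)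
    {A B : Set Ω} (hAB : Disjoint A B) (hA : ∃ P, IsPartition S A P)
    (hB : ∃ P, IsPartition S B P) : psup S h A + psup S h B ≤ psup S h (A ∪ B) := by
  classical
  have : Nonempty {P : Finset (Set Ω) // IsPartition S A P} := nonempty_subtype.2 hA
  have : Nonempty {P : Finset (Set Ω) // IsPartition S B P} := nonempty_subtype.2 hB
  refine ENNReal.iSup_add_iSup_le fun P Q => ?_
  rw [sum_union_of_isPartition h0 hAB P.2 Q.2]
  exact sum_le_psup h (isPartition_union hAB P.2 Q.2)

theorem sum_psup_le_biUnion {Ω : Type*} {S : Set (Set Ω)} (hS : IsSetSemiring S)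
    {h : Set Ω → ℝ≥0∞} (h0 : h ∅ = 0) {A : ℕ → Set Ω} (hA : ∀ n, A n ∈ S)
    (hd : Pairwise (Function.onFun Disjoint A)) (F : Finset ℕ) :
    (∃ P, IsPartition S (⋃ n ∈ F, A n) P) ∧
      ∑ n ∈ F, psup S h (A n) ≤ psup S h (⋃ n ∈ F, A n) := by
  classical
  induction F using Finset.induction_on with
  | empty =>
    refine ⟨⟨{∅}, ?_⟩, by simp⟩
    simpa using isPartition_singleton hS.empty_mem
  | insert a F ha ih =>
    obtain ⟨⟨P, hP⟩, hle⟩ := ih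
    have hdis : Disjoint (A a) (⋃ n ∈ F, A n) := by
      rw [disjoint_iUnion₂_right]
      intro n hn
      exact hd fun e => ha (e ▸ hn)
    rw [Finset.set_biUnion_insert, Finset.sum_insert ha]
    refine ⟨⟨_, isPartition_union hdis (isPartition_singleton (hA a)) hP⟩, ?_⟩
    exact (add_le_add le_rfl hle).trans
      (psup_add_le h0 hdis ⟨_, isPartition_singleton (hA a)⟩ ⟨P, hP⟩)

theorem sum_psup_le {Ω : Type*} {S : Set (Set Ω)} (hS : IsSetSemiring S)
    {h : Set Ω → ℝ≥0∞} (h0 : h ∅ = 0) {A : ℕ → Set Ω} (hA : ∀ n, A n ∈ S)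
    (hd : Pairwise (Function.onFun Disjoint A)) (hU : (⋃ n, A n) ∈ S) (F : Finset ℕ) :
    ∑ n ∈ F, psup S h (A n) ≤ psup S h (⋃ n, A n) := by
  classical
  obtain ⟨hP, hle⟩ := sum_psup_le_biUnion hS h0 hA hd F
  have hI : ((F.image A : Finset (Set Ω)) : Set (Set Ω)) ⊆ S := by
    intro C hC
    simp only [Finset.coe_image, mem_image] at hC
    obtain ⟨n, -, rfl⟩ := hC
    exact hA n
  obtain ⟨J, hJ1, hJ2, hJ3⟩ := hS.exists_disjoint_finset_sdiff_eq hU hI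
  have hB : ⋃₀ ((F.image A : Finset (Set Ω)) : Set (Set Ω)) = ⋃ n ∈ F, A n := by
    simp [sUnion_image]
  rw [hB] at hJ3
  have hsub : (⋃ n ∈ F, A n) ⊆ ⋃ n, A n := iUnion₂_subset fun n _ => subset_iUnion A n
  calc ∑ n ∈ F, psup S h (A n) ≤ psup S h (⋃ n ∈ F, A n) := hle
    _ ≤ psup S h (⋃ n ∈ F, A n) + psup S h ((⋃ n, A n) \ ⋃ n ∈ F, A n) := le_self_add
    _ ≤ psup S h ((⋃ n ∈ F, A n) ∪ ((⋃ n, A n) \ ⋃ n ∈ F, A n)) :=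
        psup_add_le h0 disjoint_sdiff_right hP ⟨J, hJ1, hJ2, hJ3.symm⟩
    _ = psup S h (⋃ n, A n) := by rw [union_sdiff_cancel hsub]

/-! ### Countable additivity of partition suprema -/

theorem sum_inter_le_psup {Ω : Type*} {S : Set (Set Ω)} (hS : IsSetSemiring S)
    {h : Set Ω → ℝ≥0∞} (h0 : h ∅ = 0) {A B : Set Ω} (hB : B ∈ S) (hBA : B ⊆ A)
    {P : Finset (Set Ω)} (hP : IsPartition S A P) : ∑ C ∈ P, h (C ∩ B) ≤ psup S h B := by
  classical
  obtain ⟨h1, h2, h3⟩ := hP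
  have hdis : ∀ C ∈ P, ∀ D ∈ P, C ≠ D → Disjoint (C ∩ B) (D ∩ B) := fun C hC D hD hCD =>
    (h2 hC hD hCD).mono inter_subset_left inter_subset_left
  have hpart : IsPartition S B (P.image fun C => C ∩ B) := by
    refine ⟨?_, ?_, ?_⟩
    · intro X hX
      simp only [Finset.coe_image, mem_image] at hX
      obtain ⟨C, hC, rfl⟩ := hX
      exact hS.inter_mem _ (h1 hC) _ hB
    · intro X hX Y hY hXY
      simp only [Finset.coe_image, mem_image] at hX hY
      obtain ⟨C, hC, rfl⟩ := hX
      obtain ⟨D, hD, rfl⟩ := hY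
      exact hdis C hC D hD fun e => hXY (by rw [e])
    · rw [Finset.coe_image, sUnion_image, ← iUnion₂_inter, ← sUnion_eq_biUnion, h3]
      exact inter_eq_right.2 hBA
  refine le_trans (le_of_eq ?_) (sum_le_psup h hpart)
  -- Two pieces with the same trace on `B` have empty trace, which contributes `h ∅ = 0`.
  rw [Finset.sum_image_of_pairwise_eq_zero]
  intro C hC D hD hCD e
  have hd := hdis C hC D hD hCD
  have e' : C ∩ B = D ∩ B := e
  rw [← e', disjoint_self] at hd
  change h (C ∩ B) = 0
  rw [hd, bot_eq_empty, h0]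

theorem psup_iUnion {Ω : Type*} {S : Set (Set Ω)} (hS : IsSetSemiring S)
    {h : Set Ω → ℝ≥0∞} (h0 : h ∅ = 0)
    (hsub : ∀ A : ℕ → Set Ω, (∀ n, A n ∈ S) → Pairwise (Function.onFun Disjoint A) →
      (⋃ n, A n) ∈ S → h (⋃ n, A n) ≤ ∑' n, h (A n))
    {A : ℕ → Set Ω} (hA : ∀ n, A n ∈ S)
    (hd : Pairwise (Function.onFun Disjoint A)) (hU : (⋃ n, A n) ∈ S) :
    psup S h (⋃ n, A n) = ∑' n, psup S h (A n) := by
  refine le_antisymm (iSup_le ?_) ?_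
  · rintro ⟨P, hP⟩
    have hC : ∀ C ∈ P, h C ≤ ∑' n, h (C ∩ A n) := by
      intro C hC
      have hCU : C ⊆ ⋃ n, A n := hP.2.2 ▸ subset_sUnion_of_mem (Finset.mem_coe.2 hC)
      have e : ⋃ n, C ∩ A n = C := by rw [← inter_iUnion]; exact inter_eq_left.2 hCU
      have := hsub (fun n => C ∩ A n) (fun n => hS.inter_mem _ (hP.1 hC) _ (hA n))
        (fun i j hij => (hd hij).mono inter_subset_right inter_subset_right)
        (by rw [e]; exact hP.1 hC)
      rwa [e] at this
    calc ∑ C ∈ P, h C ≤ ∑ C ∈ P, ∑' n, h (C ∩ A n) := Finset.sum_le_sum hC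
      _ = ∑' n, ∑ C ∈ P, h (C ∩ A n) :=
          (Summable.tsum_finsetSum fun _ _ => ENNReal.summable).symm
      _ ≤ ∑' n, psup S h (A n) :=
          ENNReal.tsum_le_tsum fun n => sum_inter_le_psup hS h0 (hA n) (subset_iUnion A n) hP
  · rw [ENNReal.tsum_eq_iSup_sum]
    exact iSup_le fun F => sum_psup_le hS h0 hA hd hU F

/-! ### Positive and negative parts in `EReal` -/

theorem coe_psup {Ω : Type*} {S : Set (Set Ω)} (h : Set Ω → ℝ≥0∞) {A : Set Ω} (hA : A ∈ S) :
    ((psup S h A : ℝ≥0∞) : EReal) =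
      ⨆ P : Finset (Set Ω), ⨆ _ : IsPartition S A P, ∑ C ∈ P, (h C : EReal) := by
  have : Nonempty {P : Finset (Set Ω) // IsPartition S A P} := ⟨⟨_, isPartition_singleton hA⟩⟩
  rw [psup, Monotone.map_ciSup_of_continuousAt continuous_coe_ennreal_ereal.continuousAt
    (fun _ _ hab => EReal.coe_ennreal_le_coe_ennreal_iff.2 hab) (OrderTop.bddAbove _),
    iSup_subtype']
  refine iSup_congr fun P => ?_
  exact map_sum (⟨⟨_, EReal.coe_ennreal_zero⟩, EReal.coe_ennreal_add⟩ : ℝ≥0∞ →+ EReal) _ _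

theorem pos_eq {Ω : Type*} {S : Set (Set Ω)} (μ : Set Ω → EReal) {A : Set Ω} (hA : A ∈ S) :
    pos S μ A = (psup S (fun C => (μ C).toENNReal) A : ℝ≥0∞) := by
  rw [coe_psup _ hA]
  simp only [pos, EReal.coe_toENNReal_eq_max, max_comm]

theorem neg_eq {Ω : Type*} {S : Set (Set Ω)} (μ : Set Ω → EReal) {A : Set Ω} (hA : A ∈ S) :
    neg S μ A = (psup S (fun C => (-μ C).toENNReal) A : ℝ≥0∞) := by
  rw [coe_psup _ hA]
  simp only [neg, EReal.coe_toENNReal_eq_max, max_comm]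

theorem toENNReal_add_toENNReal_neg (x : EReal) :
    ((x.toENNReal + (-x).toENNReal : ℝ≥0∞) : EReal) = max x (-x) := by
  rw [EReal.coe_ennreal_add, EReal.coe_toENNReal_eq_max, EReal.coe_toENNReal_eq_max]
  rcases le_total 0 x with hx | hx
  · have h1 : -x ≤ 0 := by simpa using hx
    rw [max_eq_right hx, max_eq_left h1, add_zero, max_eq_left (h1.trans hx)]
  · have h1 : 0 ≤ -x := by simpa using hx
    rw [max_eq_left hx, max_eq_right h1, zero_add, max_eq_right (hx.trans h1)]

theorem var_eq {Ω : Type*} {S : Set (Set Ω)} (μ : Set Ω → EReal) {A : Set Ω} (hA : A ∈ S) :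
    var S μ A = (psup S (fun C => (μ C).toENNReal + (-μ C).toENNReal) A : ℝ≥0∞) := by
  rw [coe_psup _ hA]
  simp only [var, toENNReal_add_toENNReal_neg]

theorem toENNReal_sum_le {ι : Type*} (s : Finset ι) (f : ι → EReal) :
    (∑ i ∈ s, f i).toENNReal ≤ ∑ i ∈ s, (f i).toENNReal := by
  classical
  induction s using Finset.induction_on with
  | empty => simp
  | insert a s ha ih =>
    rw [Finset.sum_insert ha, Finset.sum_insert ha]
    exact EReal.toENNReal_add_le.trans (add_le_add le_rfl ih)

theorem sum_ne_bot {ι : Type*} (s : Finset ι) {f : ι → EReal} (hf : ∀ i ∈ s, f i ≠ ⊥) :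
    ∑ i ∈ s, f i ≠ ⊥ := by
  classical
  induction s using Finset.induction_on with
  | empty => simp
  | insert a s ha ih =>
    rw [Finset.sum_insert ha, Ne, EReal.add_eq_bot_iff, not_or]
    exact ⟨hf a (by simp), ih fun i hi => hf i (by simp [hi])⟩

/-- Without the value `⊥`, the negation of a finite sum is the sum of the negations. -/
theorem toENNReal_neg_sum_le {ι : Type*} (s : Finset ι) {f : ι → EReal}
    (hf : ∀ i ∈ s, f i ≠ ⊥) :
    (-∑ i ∈ s, f i).toENNReal ≤ ∑ i ∈ s, (-f i).toENNReal := by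
  classical
  induction s using Finset.induction_on with
  | empty => simp
  | insert a s ha ih =>
    have hs : ∀ i ∈ s, f i ≠ ⊥ := fun i hi => hf i (by simp [hi])
    rw [Finset.sum_insert ha, Finset.sum_insert ha,
      EReal.neg_add (Or.inl (hf a (by simp))) (Or.inr (sum_ne_bot s hs)), sub_eq_add_neg]
    exact EReal.toENNReal_add_le.trans (add_le_add le_rfl (ih hs))

/-- A continuous `φ` with `φ 0 = 0` that is subadditive on the finite sums of `f` satisfies
`φ (∑' n, f n) ≤ ∑' n, φ (f n)`. No summability is required, since a non-summable `f` has `tsum`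
equal to `0`. -/
theorem apply_tsum_le {φ : EReal → ℝ≥0∞} (hφ : Continuous φ) (h0 : φ 0 = 0) {f : ℕ → EReal}
    (hsum : ∀ F : Finset ℕ, φ (∑ n ∈ F, f n) ≤ ∑ n ∈ F, φ (f n)) :
    φ (∑' n, f n) ≤ ∑' n, φ (f n) := by
  by_cases hf : Summable f
  · have ht : Filter.Tendsto (fun F : Finset ℕ => φ (∑ n ∈ F, f n)) Filter.atTop
        (nhds (φ (∑' n, f n))) := (hφ.tendsto _).comp hf.hasSum
    exact le_of_tendsto' ht fun F => (hsum F).trans (ENNReal.sum_le_tsum F)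
  · rw [tsum_eq_zero_of_not_summable hf, h0]
    exact zero_le

/-! ### Finite additivity over partitions -/

theorem IsCharge.sum_eq {Ω : Type*} {S : Set (Set Ω)} {μ : Set Ω → EReal} (hμ : IsCharge S μ)
    {A : Set Ω} (hA : A ∈ S) {P : Finset (Set Ω)} (hP : IsPartition S A P) :
    μ A = ∑ C ∈ P, μ C := by
  obtain ⟨h1, h2, rfl⟩ := hP
  have e : ⋃ i : Fin P.card, ((P.equivFin.symm i : P) : Set Ω) = ⋃₀ (P : Set (Set Ω)) := by
    rw [sUnion_eq_iUnion]
    exact P.equivFin.symm.surjective.iUnion_comp (fun C : P => (C : Set Ω))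
  have := hμ.additive P.card (fun i => ((P.equivFin.symm i : P) : Set Ω))
    (fun i => h1 (P.equivFin.symm i).2)
    (fun i j hij => h2 (P.equivFin.symm i).2 (P.equivFin.symm j).2 fun hh =>
      hij (P.equivFin.symm.injective (Subtype.ext hh)))
    (by rw [e]; exact hA)
  rw [e] at this
  rw [this, P.equivFin.symm.sum_comp (fun C : P => μ C), Finset.sum_coe_sort P μ]

theorem sum_ofReal_add {ι : Type*} (s : Finset ι) (f : ι → ℝ) :
    ∑ i ∈ s, ENNReal.ofReal (f i) + ENNReal.ofReal (-∑ i ∈ s, f i) =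
      ∑ i ∈ s, ENNReal.ofReal (-f i) + ENNReal.ofReal (∑ i ∈ s, f i) := by
  have hmax : ∀ x : ℝ, ENNReal.ofReal x = ENNReal.ofReal (max x 0) := by simp
  have key : ∀ x : ℝ, max x 0 = max (-x) 0 + x := fun x => by
    rcases le_total 0 x with hx | hx
    · rw [max_eq_left hx, max_eq_right (by linarith)]; ring
    · rw [max_eq_right hx, max_eq_left (by linarith)]; ring
  simp only [hmax (f _), hmax (-f _), hmax (∑ i ∈ s, f i), hmax (-∑ i ∈ s, f i)]
  rw [← ENNReal.ofReal_sum_of_nonneg fun _ _ => le_max_right _ _,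
    ← ENNReal.ofReal_sum_of_nonneg fun _ _ => le_max_right _ _,
    ← ENNReal.ofReal_add (Finset.sum_nonneg fun _ _ => le_max_right _ _) (le_max_right _ _),
    ← ENNReal.ofReal_add (Finset.sum_nonneg fun _ _ => le_max_right _ _) (le_max_right _ _)]
  congr 1
  rw [Finset.sum_congr rfl fun i _ => key (f i), Finset.sum_add_distrib, key (∑ i ∈ s, f i)]
  ring

/-- Where `μ A` is finite, the positive and negative sums over a partition of `A` differ by the
finite constant `μ A`; the equation is arranged to avoid subtraction in `[0,∞]`. -/
theorem sum_pos_add_eq {Ω : Type*} {S : Set (Set Ω)} {μ : Set Ω → EReal} (hμ : IsCharge S μ)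
    (hbot : ∀ A ∈ S, μ A ≠ ⊥) {A : Set Ω} (hA : A ∈ S) (hfin : μ A ≠ ⊤)
    {P : Finset (Set Ω)} (hP : IsPartition S A P) :
    ∑ C ∈ P, (μ C).toENNReal + (-μ A).toENNReal =
      ∑ C ∈ P, (-μ C).toENNReal + (μ A).toENNReal := by
  classical
  have hsum := hμ.sum_eq hA hP
  have hC : ∀ C ∈ P, μ C = ((μ C).toReal : EReal) := by
    intro C hC
    refine (EReal.coe_toReal (fun htop => hfin ?_) (hbot C (hP.1 hC))).symm
    rw [hsum, ← Finset.add_sum_erase P μ hC, htop]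
    exact EReal.top_add_of_ne_bot
      (sum_ne_bot _ fun D hD => hbot D (hP.1 (Finset.mem_of_mem_erase hD)))
  have hA' : μ A = ((∑ C ∈ P, (μ C).toReal : ℝ) : EReal) := by
    rw [hsum, Finset.sum_congr rfl hC]
    exact (map_sum (⟨⟨_, EReal.coe_zero⟩, EReal.coe_add⟩ : ℝ →+ EReal) _ _).symm
  have h1 : ∑ C ∈ P, (μ C).toENNReal = ∑ C ∈ P, ENNReal.ofReal (μ C).toReal :=
    Finset.sum_congr rfl fun C h => by rw [← EReal.real_coe_toENNReal, ← hC C h]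
  have h2 : ∑ C ∈ P, (-μ C).toENNReal = ∑ C ∈ P, ENNReal.ofReal (-(μ C).toReal) :=
    Finset.sum_congr rfl fun C h => by
      rw [← EReal.real_coe_toENNReal, EReal.coe_neg, ← hC C h]
  rw [h1, h2, hA', ← EReal.coe_neg, EReal.real_coe_toENNReal, EReal.real_coe_toENNReal]
  exact sum_ofReal_add P _

theorem psup_pos_add_eq {Ω : Type*} {S : Set (Set Ω)} {μ : Set Ω → EReal} (hμ : IsCharge S μ)
    (hbot : ∀ A ∈ S, μ A ≠ ⊥) {A : Set Ω} (hA : A ∈ S) (hfin : μ A ≠ ⊤) :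
    psup S (fun C => (μ C).toENNReal) A + (-μ A).toENNReal =
      psup S (fun C => (-μ C).toENNReal) A + (μ A).toENNReal := by
  have : Nonempty {P : Finset (Set Ω) // IsPartition S A P} := ⟨⟨_, isPartition_singleton hA⟩⟩
  rw [psup, psup, ENNReal.iSup_add, ENNReal.iSup_add]
  exact iSup_congr fun P => sum_pos_add_eq hμ hbot hA hfin P.2

theorem psup_pos_add_psup_neg {Ω : Type*} {S : Set (Set Ω)} {μ : Set Ω → EReal}
    (hμ : IsCharge S μ) (hbot : ∀ A ∈ S, μ A ≠ ⊥) {A : Set Ω} (hA : A ∈ S) (hfin : μ A ≠ ⊤) :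
    psup S (fun C => (μ C).toENNReal) A + psup S (fun C => (-μ C).toENNReal) A =
      psup S (fun C => (μ C).toENNReal + (-μ C).toENNReal) A := by
  have hn : (-μ A).toENNReal ≠ ⊤ := by
    rw [EReal.toENNReal_ne_top_iff, Ne, EReal.neg_eq_top_iff]
    exact hbot A hA
  have hp : (μ A).toENNReal ≠ ⊤ := EReal.toENNReal_ne_top_iff.2 hfin
  simp only [psup, Finset.sum_add_distrib]
  refine ENNReal.iSup_add_iSup fun P Q => ?_
  have hP := sum_pos_add_eq hμ hbot hA hfin P.2
  have hQ := sum_pos_add_eq hμ hbot hA hfin Q.2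
  -- The two sums are ordered in the same way, so the better partition for one serves both.
  rcases le_total (∑ C ∈ P.1, (μ C).toENNReal) (∑ C ∈ Q.1, (μ C).toENNReal) with h | h
  · exact ⟨Q, add_le_add h le_rfl⟩
  · refine ⟨P, add_le_add le_rfl ?_⟩
    have := add_le_add_left h (-μ A).toENNReal
    rw [hP, hQ] at this
    exact (ENNReal.add_le_add_iff_right hp).1 this

theorem psup_pos_eq_top {Ω : Type*} {S : Set (Set Ω)} {μ : Set Ω → EReal} {A : Set Ω}
    (hA : A ∈ S) (hinf : μ A = ⊤) : psup S (fun C => (μ C).toENNReal) A = ⊤ := by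
  have := sum_le_psup (fun C => (μ C).toENNReal) (isPartition_singleton hA)
  simpa [hinf] using this

/-- Countable additivity transfers from `[0,∞]` to `EReal`, where `tsum` is a priori a different
operation. -/
theorem countablyAdditiveE_of_coe {Ω : Type*} {S : Set (Set Ω)} {ν : Set Ω → EReal}
    {h : Set Ω → ℝ≥0∞} (hν : ∀ A ∈ S, ν A = h A)
    (hadd : ∀ A : ℕ → Set Ω, (∀ n, A n ∈ S) → Pairwise (Function.onFun Disjoint A) →
      (⋃ n, A n) ∈ S → h (⋃ n, A n) = ∑' n, h (A n)) : CountablyAdditiveE S ν := by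
  intro A hA hd hU
  have hs := (ENNReal.summable (f := fun n => h (A n))).hasSum.map
    (⟨⟨_, EReal.coe_ennreal_zero⟩, EReal.coe_ennreal_add⟩ : ℝ≥0∞ →+ EReal)
    continuous_coe_ennreal_ereal
  rw [hν _ hU, hadd A hA hd hU, tsum_congr fun n => hν _ (hA n)]
  exact hs.tsum_eq.symm

/-- for a signed charge `μ` with values in `(-∞, ∞]`,
`μ⁺ = μ + μ⁻` and `|μ| = μ⁺ + μ⁻`; if `μ` is a signed measure then `μ⁺, μ⁻` are measures. -/
theorem statement12 {Ω : Type*} (S : Set (Set Ω)) (hS : MeasureTheory.IsSetSemiring S)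
    (μ : Set Ω → EReal) (hμ : IsCharge S μ) (hbot : ∀ A ∈ S, μ A ≠ ⊥) :
    (∀ A ∈ S, pos S μ A = μ A + neg S μ A) ∧
    (∀ A ∈ S, var S μ A = pos S μ A + neg S μ A) ∧
    (CountablyAdditiveE S μ →
      CountablyAdditiveE S (pos S μ) ∧ CountablyAdditiveE S (neg S μ)) := by
  refine ⟨fun A hA => ?_, fun A hA => ?_, fun hcount => ⟨?_, ?_⟩⟩
  · rw [pos_eq μ hA, neg_eq μ hA]
    by_cases hfin : μ A = ⊤
    · rw [psup_pos_eq_top hA hfin, hfin, EReal.coe_ennreal_top,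
        EReal.top_add_of_ne_bot (EReal.coe_ennreal_ne_bot _)]
    · have key := congrArg ((↑) : ℝ≥0∞ → EReal) (psup_pos_add_eq hμ hbot hA hfin)
      rw [EReal.coe_ennreal_add, EReal.coe_ennreal_add] at key
      obtain ⟨r, hr⟩ : ∃ r : ℝ, μ A = r := ⟨_, (EReal.coe_toReal hfin (hbot A hA)).symm⟩
      rw [hr] at key ⊢
      generalize psup S (fun C => (μ C).toENNReal) A = p at key ⊢
      generalize psup S (fun C => (-μ C).toENNReal) A = q at key ⊢
      rw [EReal.coe_toENNReal_eq_max, EReal.coe_toENNReal_eq_max] at key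
      rcases le_total 0 r with h | h
      · rw [max_eq_left (by exact_mod_cast neg_nonpos.2 h),
          max_eq_right (by exact_mod_cast h), add_zero, add_comm] at key
        exact key
      · rw [max_eq_right (by exact_mod_cast neg_nonneg.2 h),
          max_eq_left (by exact_mod_cast h), add_zero] at key
        rw [← key, add_comm (p : EReal), ← add_assoc, ← EReal.coe_neg, ← EReal.coe_add,
          add_neg_cancel, EReal.coe_zero, zero_add]
  · rw [var_eq μ hA, pos_eq μ hA, neg_eq μ hA, ← EReal.coe_ennreal_add]
    congr 1
    by_cases hfin : μ A = ⊤
    · rw [psup_pos_eq_top hA hfin, top_add, eq_top_iff, ← psup_pos_eq_top hA hfin]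
      exact iSup_mono fun P => Finset.sum_le_sum fun C _ => le_self_add
    · exact (psup_pos_add_psup_neg hμ hbot hA hfin).symm
  · refine countablyAdditiveE_of_coe (fun A hA => pos_eq μ hA) fun A hA hd hU =>
      psup_iUnion hS (by simp [hμ.empty]) (fun B hB hBd hBU => ?_) hA hd hU
    rw [hcount B hB hBd hBU]
    exact apply_tsum_le EReal.continuous_toENNReal (by simp) fun F => toENNReal_sum_le F _
  · refine countablyAdditiveE_of_coe (fun A hA => neg_eq μ hA) fun A hA hd hU =>
      psup_iUnion hS (by simp [hμ.empty]) (fun B hB hBd hBU => ?_) hA hd hU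
    rw [hcount B hB hBd hBU]
    exact apply_tsum_le (φ := fun x => (-x).toENNReal)
      (EReal.continuous_toENNReal.comp continuous_neg) (by simp)
      fun F => toENNReal_neg_sum_le F fun n _ => hbot _ (hB n)

end SignedCharges
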